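/- Let n ≥ 4. For every i ∈ [2,n−1], the polynomial g_{ii}, i.e. the determinant of G_{ii}(X) regarded as an element of the polynomial ring ℂ[x_{kl} : 1 ≤ k,l ≤ n] in the n² entries of a generic matrix X, is irreducible. -/

import Mathlib

/-!
With `a` and `b` the first and last rows of `X`, the rows of `G_{ii}(X)` are, up to order, the shifts
of `a` and of `b` by `0, …, i - 1`, together with rows `i + 1, …, n - 1` of `X` shifted by `i - 1`.
The proof works with a family of such matrices, with `q` shifts of `a`, `p` shifts of `b` and `s`
further rows (`shiftMat` with labels `RowLabels q p s δ`), and shows that their determinants are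
irreducible by induction on the size (`irreducible_shiftMat`).

In the inductive step all variables of the last column except one, `x_v`, are set to zero. The
determinant `g` then becomes `± x_v h` with `h` the determinant of a smaller member of the family,
irreducible by induction. Since `g` is homogeneous, its factors are too
(`exists_isHomogeneous_of_mul`), and the specialization preserves degrees; hence a proper
factorization of `g` would contain a linear form in the variables of the last column. Such a form is
excluded by a point where it vanishes while the matrix is visibly invertible
(`irreducible_of_killVars`, `shiftMat_step`). The descent ends at a `1 × 1` matrix whose entry is a
variable.
-/

open Matrix

noncomputable section

/-- Entry of a matrix addressed with natural-number indices (0 out of range). -/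
def ent {R : Type*} [CommRing R] {N M : ℕ} (A : Matrix (Fin N) (Fin M) R) (i j : ℕ) : R :=
  if h : i < N ∧ j < M then A ⟨i, h.1⟩ ⟨j, h.2⟩ else 0

/-- The matrix `G_{ij}(X)` of size `n+j-1` for an `(m+1) × (m+1)` matrix `X` over a commutative
ring (paper's `n = m+1`; `i, j` are paper 1-based values with `2 ≤ j ≤ i ≤ n-1`). -/
def matG {R : Type*} [CommRing R] {m : ℕ} (i j : ℕ) (X : Matrix (Fin (m+1)) (Fin (m+1)) R) :
    Matrix (Fin (m+j)) (Fin (m+j)) R :=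
  Matrix.of fun r c =>
    if (r:ℕ) < 2*(j-2) then
      (if (r:ℕ)/2 ≤ (c:ℕ) ∧ (c:ℕ) ≤ (r:ℕ)/2 + m then
        ent X (if (r:ℕ) % 2 = 0 then 0 else m) ((c:ℕ) - (r:ℕ)/2) else 0)
    else if (r:ℕ) < 2*(j-2) + (i-j+2) then
      (if j-2 ≤ (c:ℕ) ∧ (c:ℕ) ≤ j-2+m then
        ent X (if (r:ℕ) = 2*(j-2) then 0 else m+j-i-1 + ((r:ℕ) - 2*(j-2))) ((c:ℕ) - (j-2))
       else 0)
    else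
      (if j-1 ≤ (c:ℕ) ∧ (c:ℕ) ≤ j-1+m then
        ent X (if (r:ℕ) = 2*(j-2)+(i-j+2) then 0 else i-1 + ((r:ℕ) - (2*(j-2)+(i-j+2))))
          ((c:ℕ) - (j-1))
       else 0)

/-- The generic matrix whose `(a,b)` entry is the indeterminate `x_{ab}`. -/
def genX (m : ℕ) :
    Matrix (Fin (m+1)) (Fin (m+1)) (MvPolynomial (Fin (m+1) × Fin (m+1)) ℂ) :=
  Matrix.of fun a b => MvPolynomial.X (a, b)

/-! ### Irreducibility by specialization of homogeneous polynomials -/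

/-- A factor of a nonzero homogeneous polynomial is homogeneous. Grading by an extra variable `T`
via `x_v ↦ x_v T` turns homogeneous components into coefficients in `T`; degree and trailing degree
in `T` are both additive, so they agree on each factor as soon as they agree on the product. -/
theorem exists_isHomogeneous_of_mul {τ : Type*} {P Q : MvPolynomial τ ℂ} {N : ℕ}
    (h : (P * Q).IsHomogeneous N) (h0 : P * Q ≠ 0) : ∃ d, P.IsHomogeneous d := by
  classical
  let θ : MvPolynomial τ ℂ →ₐ[ℂ] Polynomial (MvPolynomial τ ℂ) :=
    MvPolynomial.aeval fun v => Polynomial.C (MvPolynomial.X v) * Polynomial.X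
  have hmon : ∀ (d : τ →₀ ℕ) (r : ℂ), θ (MvPolynomial.monomial d r) =
      Polynomial.monomial d.degree (MvPolynomial.monomial d r) := by
    intro d r
    have h1 : (MvPolynomial.monomial d r : MvPolynomial τ ℂ) =
        MvPolynomial.C r * d.prod fun i k => MvPolynomial.X i ^ k := MvPolynomial.monomial_eq
    rw [MvPolynomial.aeval_monomial, ← Polynomial.C_mul_X_pow_eq_monomial, h1]
    simp only [mul_pow, Finsupp.prod, Finset.prod_mul_distrib, map_mul, map_prod, map_pow,
      Finset.prod_pow_eq_pow_sum, Finsupp.degree_apply]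
    rw [mul_assoc]
    rfl
  have hcoeff : ∀ (F : MvPolynomial τ ℂ) (n : ℕ),
      (θ F).coeff n = MvPolynomial.homogeneousComponent n F := by
    intro F n
    induction F using MvPolynomial.induction_on' with
    | monomial d r =>
      rw [hmon, Polynomial.coeff_monomial]
      ext e
      rw [MvPolynomial.coeff_homogeneousComponent]
      split_ifs with h1 h2 h2 <;> simp [MvPolynomial.coeff_monomial] <;> grind
    | add p q hp hq => rw [map_add, map_add, Polynomial.coeff_add, hp, hq]
  have hne : ∀ F : MvPolynomial τ ℂ, F ≠ 0 → θ F ≠ 0 := by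
    intro F hF hz
    apply hF
    rw [← MvPolynomial.sum_homogeneousComponent F]
    refine Finset.sum_eq_zero fun n _ => ?_
    rw [← hcoeff, hz, Polynomial.coeff_zero]
  have hP : P ≠ 0 := left_ne_zero_of_mul h0
  have hQ : Q ≠ 0 := right_ne_zero_of_mul h0
  have hPQ : θ (P * Q) = Polynomial.monomial N (P * Q) := by
    ext1 n
    rw [hcoeff, Polynomial.coeff_monomial, MvPolynomial.homogeneousComponent_of_mem h]
    simp [eq_comm]
  have hdeg := Polynomial.natDegree_mul (hne P hP) (hne Q hQ)
  have htr := Polynomial.natTrailingDegree_mul (hne P hP) (hne Q hQ)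
  rw [← map_mul, hPQ, Polynomial.natDegree_monomial, if_neg h0] at hdeg
  rw [← map_mul, hPQ, Polynomial.natTrailingDegree_monomial h0] at htr
  have h1 := Polynomial.natTrailingDegree_le_natDegree (θ P)
  have h2 := Polynomial.natTrailingDegree_le_natDegree (θ Q)
  refine ⟨(θ P).natDegree, ?_⟩
  have h3 : ∀ n, n ≠ (θ P).natDegree → MvPolynomial.homogeneousComponent n P = 0 := by
    intro n hn
    rw [← hcoeff]
    rcases lt_or_gt_of_ne hn with h | h
    · exact Polynomial.coeff_eq_zero_of_lt_natTrailingDegree (by omega)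
    · exact Polynomial.coeff_eq_zero_of_natDegree_lt h
  rw [← MvPolynomial.sum_homogeneousComponent P]
  refine MvPolynomial.IsHomogeneous.sum _ _ _ fun n _ => ?_
  by_cases hn : n = (θ P).natDegree
  · rw [hn, MvPolynomial.sum_homogeneousComponent]
    exact MvPolynomial.homogeneousComponent_isHomogeneous _ _
  · rw [h3 n hn]; exact MvPolynomial.isHomogeneous_zero _ _ _

/-- The specialization that sets the variables in `S` to zero and keeps all others. -/
def killVars {τ : Type*} (S : Set τ) : MvPolynomial τ ℂ →ₐ[ℂ] MvPolynomial τ ℂ :=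
  open Classical in MvPolynomial.aeval fun v => if v ∈ S then 0 else MvPolynomial.X v

theorem IsHomogeneous.killVars {τ : Type*} (S : Set τ) {F : MvPolynomial τ ℂ} {n : ℕ}
    (h : F.IsHomogeneous n) : (killVars S F).IsHomogeneous n := by
  have := h.aeval (fun v => open Classical in
    if v ∈ S then (0 : MvPolynomial τ ℂ) else MvPolynomial.X v) (n := 1)
    (fun v => by
      split_ifs
      · exact MvPolynomial.isHomogeneous_zero _ _ _
      · exact MvPolynomial.isHomogeneous_X _ _)
  rwa [one_mul] at this

theorem coeff_killVars {τ : Type*} (S : Set τ) {F : MvPolynomial τ ℂ}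
    (h : F.IsHomogeneous 1) {v : τ} (hv : v ∉ S) :
    (killVars S F).coeff (Finsupp.single v 1) = F.coeff (Finsupp.single v 1) := by
  classical
  have hF : F ∈ MvPolynomial.homogeneousSubmodule τ ℂ 1 := h
  rw [MvPolynomial.homogeneousSubmodule_one_eq_span_X] at hF
  clear h
  induction hF using Submodule.span_induction with
  | mem x hx =>
    obtain ⟨w, rfl⟩ := hx
    by_cases hw : w ∈ S
    · have : w ≠ v := by rintro rfl; exact hv hw
      simp [killVars, hw, MvPolynomial.coeff_X, Finsupp.single_left_inj, this]
    · simp [killVars, hw]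
  | zero => simp
  | add x y _ _ hx hy => simp [hx, hy]
  | smul a x _ hx => simp [hx]

/-- A linear form evaluated at a point `x` where only its `v`- and `w`-terms can be nonzero. -/
theorem eval_linear {τ : Type*} {F : MvPolynomial τ ℂ}
    (h : F.IsHomogeneous 1) (x : τ → ℂ) {v w : τ} (hvw : v ≠ w)
    (hz : ∀ u, u ≠ v → u ≠ w → F.coeff (Finsupp.single u 1) = 0 ∨ x u = 0) :
    MvPolynomial.eval x F = F.coeff (Finsupp.single v 1) * x v
      + F.coeff (Finsupp.single w 1) * x w := by
  classical
  have hs : ∀ s : Finset τ, F.support ⊆ s.image (fun u => Finsupp.single u 1) →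
      MvPolynomial.eval x F = ∑ u ∈ s, F.coeff (Finsupp.single u 1) * x u := by
    intro s hs
    rw [MvPolynomial.eval_eq, Finset.sum_subset hs, Finset.sum_image]
    · refine Finset.sum_congr rfl fun u _ => ?_
      rw [Finsupp.support_single _ (by norm_num)]
      simp
    · intro a _ b _ hab
      exact (Finsupp.single_left_inj one_ne_zero).1 hab
    · intro d _ hd
      rw [MvPolynomial.notMem_support_iff.1 hd, zero_mul]
  have hsub : F.support ⊆ (F.vars ∪ {v, w}).image (fun u => Finsupp.single u 1) := by
    intro d hd
    have h1 : d.degree = 1 := by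
      by_contra hne
      exact MvPolynomial.mem_support_iff.1 hd (h.coeff_eq_zero hne)
    have h2 : d ∈ {d : τ →₀ ℕ | d.degree = 1} := h1
    rw [← Finsupp.range_single_one] at h2
    obtain ⟨u, rfl⟩ := h2
    refine Finset.mem_image.2 ⟨u, Finset.mem_union_left _ ?_, rfl⟩
    exact MvPolynomial.mem_vars_iff_mem_support u |>.2 ⟨_, hd, by simp⟩
  rw [hs _ hsub, ← Finset.sum_pair (f := fun u => F.coeff (Finsupp.single u 1) * x u) hvw]
  symm
  apply Finset.sum_subset Finset.subset_union_right
  intro u _ hu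
  simp only [Finset.mem_insert, Finset.mem_singleton, not_or] at hu
  rcases hz u hu.1 hu.2 with h | h <;> simp [h]

/-- Irreducibility by specialization. Let `g` be homogeneous and become `x_v h`, up to a unit, when
the variables in `S` are set to zero, with `h` irreducible. If `g = P Q`, one factor specializes to a
unit or to a multiple of `x_v`. In the first case it has degree `0`. In the second it is a linear
form in `x_v` and the variables in `S`, with nonzero `x_v`-coefficient, and `hpt` provides a zero of
this form at which `g` does not vanish. -/
theorem irreducible_of_killVars {τ : Type*} {g h : MvPolynomial τ ℂ} {N : ℕ} {S : Set τ}
    {v w : τ} (hg : g.IsHomogeneous N) (hv : v ∉ S) (hw : w ∈ S)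
    (hh : Irreducible h) (hgh : Associated (killVars S g) (MvPolynomial.X v * h))
    (hpt : ∀ d : ℂ, ∃ x : τ → ℂ, x v = d * x w ∧ (∀ u ∈ S, u ≠ w → x u = 0) ∧
      MvPolynomial.eval x g ≠ 0) : Irreducible g := by
  have hX : Prime (MvPolynomial.X v : MvPolynomial τ ℂ) := MvPolynomial.X_prime
  have hk0 : killVars S g ≠ 0 := by
    rw [hgh.ne_zero_iff]; exact mul_ne_zero hX.ne_zero hh.ne_zero
  have hg0 : g ≠ 0 := by rintro rfl; simp at hk0
  -- The factor `Q` complementary to the one containing `h` is a unit.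
  have key : ∀ P Q : MvPolynomial τ ℂ, g = P * Q → h ∣ killVars S P → IsUnit Q := by
    intro P Q hPQ ⟨z, hz⟩
    obtain ⟨d, hd⟩ := exists_isHomogeneous_of_mul (P := Q) (Q := P) (N := N)
      (by rwa [mul_comm, ← hPQ]) (by rwa [mul_comm, ← hPQ])
    have hQd := IsHomogeneous.killVars S hd
    have hQ0 : killVars S Q ≠ 0 := by
      intro h0; rw [hPQ, map_mul, h0, mul_zero] at hk0; exact hk0 rfl
    have hassoc : Associated (z * killVars S Q) (MvPolynomial.X v) := by
      have : Associated (h * (z * killVars S Q)) (h * MvPolynomial.X v) := by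
        rw [← mul_assoc, ← hz, ← map_mul, ← hPQ, mul_comm h]; exact hgh
      exact Associated.of_mul_left this (Associated.refl h) hh.ne_zero
    have hirr : Irreducible (z * killVars S Q) := hassoc.symm.irreducible hX.irreducible
    rcases hirr.isUnit_or_isUnit rfl with hu | hu
    · -- Here `Q` specializes to `c' x_v`, so `Q` is a linear form.
      exfalso
      have h2 : Associated (killVars S Q) (MvPolynomial.X v) :=
        (associated_unit_mul_left _ _ hu).symm.trans hassoc
      obtain ⟨c, hc⟩ := h2.symm
      obtain ⟨c', hc', hcc⟩ := MvPolynomial.isUnit_iff_eq_C_of_isReduced.1 c.isUnit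
      rw [hcc] at hc
      have hd1 : d = 1 := by
        refine hQd.inj_right ?_ hQ0
        rw [← hc, mul_comm]
        exact MvPolynomial.isHomogeneous_C_mul_X _ _
      subst hd1
      have hcv : Q.coeff (Finsupp.single v 1) = c' := by
        rw [← coeff_killVars S hd hv, ← hc, mul_comm,
          MvPolynomial.coeff_C_mul, MvPolynomial.coeff_X_same, mul_one]
      have hcu : ∀ u, u ∉ S → u ≠ v → Q.coeff (Finsupp.single u 1) = 0 := by
        classical
        intro u hu huv
        rw [← coeff_killVars S hd hu, ← hc, mul_comm, MvPolynomial.coeff_C_mul,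
          MvPolynomial.coeff_X, if_neg, mul_zero]
        rw [Finsupp.single_left_inj one_ne_zero]
        exact huv.symm
      obtain ⟨x, hx1, hx2, hx3⟩ := hpt (-(Q.coeff (Finsupp.single w 1)) / c')
      apply hx3
      have hvw : v ≠ w := by rintro rfl; exact hv hw
      have := eval_linear hd x hvw (by
        intro u huv huw
        by_cases huS : u ∈ S
        · exact Or.inr (hx2 u huS huw)
        · exact Or.inl (hcu u huS huv))
      rw [hPQ, map_mul, this, hcv, hx1]
      field_simp [hc'.ne_zero]
      simp
    · obtain ⟨c', hc', hcc⟩ := MvPolynomial.isUnit_iff_eq_C_of_isReduced.1 hu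
      have hd0 : d = 0 := by
        refine hQd.inj_right ?_ hQ0
        rw [hcc]; exact MvPolynomial.isHomogeneous_C _ _
      subst hd0
      have h1 := MvPolynomial.totalDegree_zero_iff_isHomogeneous _ |>.2 hd
      have h2 := MvPolynomial.totalDegree_eq_zero_iff_eq_C.1 h1
      rw [h2]
      refine IsUnit.map _ (isUnit_iff_ne_zero.2 ?_)
      intro h3
      rw [h3, map_zero] at h2
      rw [h2, map_zero] at hQ0
      exact hQ0 rfl
  refine ⟨fun hu => ?_, fun P Q hPQ => ?_⟩
  · have h1 := hgh.isUnit (hu.map (killVars S))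
    exact hh.not_isUnit (isUnit_of_mul_isUnit_right h1)
  · have hdvd : h ∣ killVars S P * killVars S Q := by
      rw [← map_mul, ← hPQ]
      exact (Dvd.intro_left _ rfl).trans hgh.symm.dvd
    rcases hh.prime.dvd_or_dvd hdvd with h1 | h1
    · exact Or.inr (key P Q hPQ h1)
    · exact Or.inl (key Q P (by rw [hPQ, mul_comm]) h1)

/-! ### Matrices of shifted generic rows -/

/-- The matrix whose row labelled `ρ r = (κ, k)` is the generic sequence
`x_{κ,0}, …, x_{κ,L κ - 1}` shifted `k` columns to the right and truncated to `N` columns. -/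
def shiftMat {N : ℕ} (L : ℕ → ℕ) (ρ : Fin N → ℕ × ℕ) :
    Matrix (Fin N) (Fin N) (MvPolynomial (ℕ × ℕ) ℂ) :=
  Matrix.of fun r c =>
    if (ρ r).2 ≤ (c : ℕ) ∧ (c : ℕ) < (ρ r).2 + L (ρ r).1 then
      MvPolynomial.X ((ρ r).1, (c : ℕ) - (ρ r).2) else 0

theorem shiftMat_det_isHomogeneous {N : ℕ} (L : ℕ → ℕ) (ρ : Fin N → ℕ × ℕ) :
    (shiftMat L ρ).det.IsHomogeneous N := by
  rw [Matrix.det_apply]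
  refine MvPolynomial.IsHomogeneous.sum _ _ _ fun σ _ => ?_
  rw [Units.smul_def, zsmul_eq_mul]
  have h1 : (∏ r, shiftMat L ρ (σ r) r).IsHomogeneous (∑ _r : Fin N, 1) := by
    refine MvPolynomial.IsHomogeneous.prod _ _ _ fun r _ => ?_
    simp only [shiftMat, Matrix.of_apply]
    split_ifs
    · exact MvPolynomial.isHomogeneous_X _ _
    · exact MvPolynomial.isHomogeneous_zero _ _ _
  simp only [Finset.sum_const, Finset.card_univ, Fintype.card_fin, smul_eq_mul, mul_one] at h1
  have h2 := h1.C_mul (((Equiv.Perm.sign σ : ℤˣ) : ℤ) : ℂ)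
  simpa using h2

/-- A matrix is invertible if each column carries the first nonzero entry of some row. -/
theorem det_ne_zero_of_pivots {N : ℕ} (A : Matrix (Fin N) (Fin N) ℂ)
    (h : ∀ c, ∃ r, A r c ≠ 0 ∧ ∀ c' < c, A r c' = 0) : A.det ≠ 0 := by
  intro hdet
  obtain ⟨v, hv, hAv⟩ := Matrix.exists_mulVec_eq_zero_iff.2 hdet
  apply hv
  have key : ∀ k : ℕ, ∀ c : Fin N, N ≤ (c : ℕ) + k → v c = 0 := by
    intro k
    induction k with
    | zero => intro c hc; omega
    | succ k ih =>
      intro c hc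
      obtain ⟨r, hr, hr'⟩ := h c
      have h1 : ∑ c', A r c' * v c' = 0 := congrFun hAv r
      rw [Finset.sum_eq_single c] at h1
      · exact (mul_eq_zero.1 h1).resolve_left hr
      · intro c' _ hne
        rcases lt_or_gt_of_ne hne with h2 | h2
        · rw [hr' c' h2, zero_mul]
        · have h3 : (c : ℕ) < c' := h2
          rw [ih c' (by omega), mul_zero]
      · simp
  funext c
  exact key N c (by omega)

/-- The inductive step. The nonzero entries of the last column are top variables
`x_{κ, L κ - 1}`. When those with `κ ≠ κ₀ = (ρ r₀).1` are set to zero, only the entry in row `r₀`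
survives, and Laplace expansion gives this variable times the determinant of the matrix with row
`r₀` and the last column deleted, which is again of the form `shiftMat`. The hypothesis `hpt` asks
for points on each line `x_{κ₀, top} = d x_{κ₁, top}` with the other top variables zero, at which
the matrix has a pivot in every column. -/
theorem shiftMat_step {N : ℕ} {L L' : ℕ → ℕ} {ρ : Fin (N + 1) → ℕ × ℕ} {r₀ : Fin (N + 1)}
    {κ₁ : ℕ} (hκ : κ₁ ≠ (ρ r₀).1)
    (htop : ∀ r, (ρ r).2 + L (ρ r).1 ≤ N + 1)
    (h0 : (ρ r₀).2 + L (ρ r₀).1 = N + 1) (hpos : 1 ≤ L (ρ r₀).1)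
    (huniq : ∀ r, (ρ r).1 = (ρ r₀).1 → (ρ r).2 + L (ρ r).1 = N + 1 → r = r₀)
    (hL' : ∀ r, r ≠ r₀ → L' (ρ r).1 = if (ρ r).1 = (ρ r₀).1 then L (ρ r).1 else L (ρ r).1 - 1)
    (hirr : Irreducible (shiftMat L' (ρ ∘ r₀.succAbove)).det)
    (hpt : ∀ d : ℂ, ∃ x : ℕ × ℕ → ℂ,
      x ((ρ r₀).1, L (ρ r₀).1 - 1) = d * x (κ₁, L κ₁ - 1) ∧
      (∀ κ, κ ≠ (ρ r₀).1 → κ ≠ κ₁ → x (κ, L κ - 1) = 0) ∧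
      ∀ c < N + 1, ∃ r, (ρ r).2 ≤ c ∧ c < (ρ r).2 + L (ρ r).1 ∧ x ((ρ r).1, c - (ρ r).2) ≠ 0 ∧
        ∀ c', (ρ r).2 ≤ c' → c' < c → x ((ρ r).1, c' - (ρ r).2) = 0) :
    Irreducible (shiftMat L ρ).det := by
  set κ₀ := (ρ r₀).1 with hκ₀
  let S : Set (ℕ × ℕ) := {u | u.1 ≠ κ₀ ∧ u.2 = L u.1 - 1}
  refine irreducible_of_killVars (S := S) (v := (κ₀, L κ₀ - 1)) (w := (κ₁, L κ₁ - 1))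
    (shiftMat_det_isHomogeneous L ρ) (by simp [S]) (by simp [S, hκ]) hirr ?_ ?_
  · have hcol : ∀ r, r ≠ r₀ → killVars S (shiftMat L ρ r (Fin.last N)) = 0 := by
      intro r hr
      simp only [shiftMat, Matrix.of_apply, Fin.val_last]
      split_ifs with hc
      · have h1 := htop r
        have h2 : (ρ r).1 ≠ κ₀ := fun h => hr (huniq r h (by omega))
        simp only [killVars, MvPolynomial.aeval_X]
        rw [if_pos]
        exact ⟨h2, by simp only; omega⟩
      · exact map_zero _
    have hminor : ((killVars S).mapMatrix (shiftMat L ρ)).submatrix r₀.succAbove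
        (Fin.last N).succAbove = shiftMat L' (ρ ∘ r₀.succAbove) := by
      ext1 r c
      have hr : r₀.succAbove r ≠ r₀ := Fin.succAbove_ne _ _
      have h1 := htop (r₀.succAbove r)
      have h2 := hL' _ hr
      have h3 := huniq (r₀.succAbove r)
      have hc := c.2
      simp only [shiftMat, Matrix.submatrix_apply, AlgHom.mapMatrix_apply, Matrix.map_apply,
        Matrix.of_apply, Function.comp_apply, Fin.succAbove_last, Fin.val_castSucc]
      generalize ρ (r₀.succAbove r) = u at *
      obtain ⟨κ, k⟩ := u
      simp only at *
      by_cases hk : κ = κ₀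
      · rw [if_pos hk] at h2
        rw [h2]
        split_ifs with h4
        · simp only [killVars, MvPolynomial.aeval_X]
          rw [if_neg]
          rintro ⟨h5, -⟩
          exact h5 hk
        · exact map_zero _
      · rw [if_neg hk] at h2
        by_cases h5 : (c : ℕ) - k = L κ - 1
        · rw [if_neg (c := k ≤ (c : ℕ) ∧ (c : ℕ) < k + L' κ) (by omega)]
          split_ifs with h4
          · simp only [killVars, MvPolynomial.aeval_X]
            rw [if_pos]
            exact ⟨hk, h5⟩
          · exact map_zero _
        · have h6 : (k ≤ (c : ℕ) ∧ (c : ℕ) < k + L κ) ↔ (k ≤ (c : ℕ) ∧ (c : ℕ) < k + L' κ) := by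
            omega
          simp only [h6]
          split_ifs with h4
          · simp only [killVars, MvPolynomial.aeval_X]
            rw [if_neg]
            rintro ⟨-, h7⟩
            exact h5 h7
          · exact map_zero _
    have hr0 : killVars S (shiftMat L ρ r₀ (Fin.last N)) = MvPolynomial.X (κ₀, L κ₀ - 1) := by
      simp only [shiftMat, Matrix.of_apply, Fin.val_last]
      rw [if_pos (by rw [← hκ₀]; omega)]
      simp only [killVars, MvPolynomial.aeval_X]
      rw [if_neg]
      · rw [← hκ₀]; congr 2; omega
      · rintro ⟨h5, -⟩
        exact h5 rfl
    rw [AlgHom.map_det, Matrix.det_succ_column _ (Fin.last N), Finset.sum_eq_single r₀, hminor,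
      AlgHom.mapMatrix_apply, Matrix.map_apply, hr0, mul_assoc]
    · exact (associated_unit_mul_left _ _ ((isUnit_one.neg).pow _))
    · intro r _ hr
      rw [AlgHom.mapMatrix_apply, Matrix.map_apply, hcol r hr]
      simp
    · simp
  · intro d
    obtain ⟨x, hx1, hx2, hx3⟩ := hpt d
    refine ⟨x, hx1, ?_, ?_⟩
    · rintro ⟨κ, j⟩ ⟨hu1, hu2⟩ hne
      simp only at hu1 hu2
      subst hu2
      exact hx2 κ hu1 (by rintro rfl; exact hne rfl)
    · rw [RingHom.map_det]
      apply det_ne_zero_of_pivots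
      intro c
      obtain ⟨r, hr1, hr2, hr3, hr4⟩ := hx3 c c.2
      refine ⟨r, ?_, ?_⟩
      · simp only [shiftMat, RingHom.mapMatrix_apply, Matrix.map_apply, Matrix.of_apply]
        rw [if_pos ⟨hr1, hr2⟩, MvPolynomial.eval_X]
        exact hr3
      · intro c' hc'
        simp only [shiftMat, RingHom.mapMatrix_apply, Matrix.map_apply, Matrix.of_apply]
        split_ifs with h
        · rw [MvPolynomial.eval_X]
          exact hr4 c' h.1 hc'
        · exact map_zero _

/-! ### The inductive family -/

/-- `ρ` lists without repetition the labels `(0, k)` for `k < q`, `(1, k)` for `k < p`, and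
`(κ, δ)` for `2 ≤ κ < s + 2`: that is, `q` shifts of a sequence `a`, `p` shifts of a sequence `b`, and
`s` further sequences `y_κ`, each shifted by `δ`. -/
def RowLabels {N : ℕ} (q p s δ : ℕ) (ρ : Fin N → ℕ × ℕ) : Prop :=
  Function.Injective ρ ∧ ∀ κ k, (∃ r, ρ r = (κ, k)) ↔
    (κ = 0 ∧ k < q) ∨ (κ = 1 ∧ k < p) ∨ (2 ≤ κ ∧ κ < s + 2 ∧ k = δ)

/-- The number of entries of the sequence `κ`, chosen so that its most shifted row ends exactly in
the last of the `q + p + s` columns. -/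
def rowLen (q p s δ : ℕ) (κ : ℕ) : ℕ :=
  if κ = 0 then p + s + 1 else if κ = 1 then q + s + 1 else q + p + s - δ

theorem RowLabels.delete {N q p s q' p' s' δ : ℕ} {ρ : Fin (N + 1) → ℕ × ℕ}
    (h : RowLabels q p s δ ρ) (r₀ : Fin (N + 1))
    (hD : ∀ κ k, ((κ = 0 ∧ k < q') ∨ (κ = 1 ∧ k < p') ∨ (2 ≤ κ ∧ κ < s' + 2 ∧ k = δ)) ↔
      ((κ = 0 ∧ k < q) ∨ (κ = 1 ∧ k < p) ∨ (2 ≤ κ ∧ κ < s + 2 ∧ k = δ)) ∧ (κ, k) ≠ ρ r₀) :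
    RowLabels q' p' s' δ (ρ ∘ r₀.succAbove) := by
  refine ⟨h.1.comp Fin.succAbove_right_injective, fun κ k => ?_⟩
  rw [hD, ← h.2]
  constructor
  · rintro ⟨r, hr⟩
    refine ⟨⟨_, hr⟩, ?_⟩
    rw [← hr]
    exact fun h' => Fin.succAbove_ne r₀ r (h.1 h')
  · rintro ⟨⟨r, hr⟩, hne⟩
    have : r ≠ r₀ := by rintro rfl; exact hne hr.symm
    obtain ⟨z, hz⟩ := Fin.exists_succAbove_eq this
    exact ⟨z, by simp [hz, hr]⟩

theorem RowLabels.mem {N q p s δ : ℕ} {ρ : Fin N → ℕ × ℕ} (h : RowLabels q p s δ ρ) (r : Fin N) :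
    ((ρ r).1 = 0 ∧ (ρ r).2 < q) ∨ ((ρ r).1 = 1 ∧ (ρ r).2 < p) ∨
      (2 ≤ (ρ r).1 ∧ (ρ r).1 < s + 2 ∧ (ρ r).2 = δ) :=
  (h.2 _ _).1 ⟨r, rfl⟩

theorem irreducible_shiftMat_base {N q p s δ : ℕ} (hs : s = 0) (hp : p = 0) (hq : q = 1)
    (hN : N = q + p + s) {ρ : Fin N → ℕ × ℕ}
    (h : RowLabels q p s δ ρ) : Irreducible (shiftMat (rowLen q p s δ) ρ).det := by
  subst hs hp hq
  simp only [add_zero] at hN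
  subst hN
  have h1 : ρ 0 = (0, 0) := by
    have := h.mem 0
    ext <;> simp only <;> omega
  rw [Matrix.det_unique]
  have : shiftMat (rowLen 1 0 0 δ) ρ default default = MvPolynomial.X (0, 0) := by
    simp [shiftMat, h1, rowLen]
  rw [this]
  exact (MvPolynomial.X_prime).irreducible

/-- Removing one shift of `b`: the point has `a = t ^ (p + 1)` and `b = 1 + d t ^ q`, in terms of
generating polynomials. -/
theorem irreducible_step_b {N q p δ : ℕ} (hq : 1 ≤ q) (hN : N = q + p)
    {ρ : Fin (N + 1) → ℕ × ℕ} (h : RowLabels q (p + 1) 0 δ ρ)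
    (ih : ∀ ρ' : Fin N → ℕ × ℕ, RowLabels q p 0 δ ρ' →
      Irreducible (shiftMat (rowLen q p 0 δ) ρ').det) :
    Irreducible (shiftMat (rowLen q (p + 1) 0 δ) ρ).det := by
  obtain ⟨r₀, hr₀⟩ := (h.2 1 p).2 (by omega)
  refine shiftMat_step (r₀ := r₀) (κ₁ := 0) (L' := rowLen q p 0 δ) ?_ ?_ ?_ ?_ ?_ ?_
    (ih _ (h.delete r₀ ?_)) ?_
  · simp [hr₀]
  · intro r
    have := h.mem r
    simp only [rowLen]
    grind
  · simp [hr₀, rowLen]; omega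
  · simp [hr₀, rowLen]
  · intro r h1 h2
    apply h.1
    rw [hr₀] at h1 ⊢
    simp only [h1, rowLen] at h2
    ext <;> grind
  · intro r hr
    have := h.mem r
    simp only [rowLen, hr₀]
    grind
  · intro κ k
    rw [hr₀, Ne, Prod.mk.injEq]
    omega
  · intro d
    refine ⟨fun u => if u = (0, p + 1) then 1 else if u = (1, 0) then 1
      else if u = (1, q) then d else 0, ?_, ?_, ?_⟩
    · simp [hr₀, rowLen]; omega
    · intro κ h1 h2
      rw [hr₀] at h1
      simp [h1, h2]
    · intro c hc
      by_cases hcp : c < p + 1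
      · obtain ⟨r, hr⟩ := (h.2 1 c).2 (by omega)
        refine ⟨r, ?_⟩
        simp only [hr, rowLen]
        refine ⟨le_rfl, by simp, by simp, ?_⟩
        intro c' h1 h2
        omega
      · obtain ⟨r, hr⟩ := (h.2 0 (c - (p + 1))).2 (by omega)
        refine ⟨r, ?_⟩
        simp only [hr, rowLen]
        refine ⟨by omega, by simp; omega, ?_, ?_⟩
        · rw [if_pos (by ext <;> simp only; omega)]; exact one_ne_zero
        · intro c' h1 h2
          simp only [Prod.mk.injEq]
          rw [if_neg (by omega), if_neg (by omega), if_neg (by omega)]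

/-- Removing one shift of `a`: the point has `b = t ^ (q + 1)` and `a = 1 + d t ^ p`. -/
theorem irreducible_step_a {N q p δ : ℕ} (hp : 1 ≤ p) (hN : N = q + p)
    {ρ : Fin (N + 1) → ℕ × ℕ} (h : RowLabels (q + 1) p 0 δ ρ)
    (ih : ∀ ρ' : Fin N → ℕ × ℕ, RowLabels q p 0 δ ρ' →
      Irreducible (shiftMat (rowLen q p 0 δ) ρ').det) :
    Irreducible (shiftMat (rowLen (q + 1) p 0 δ) ρ).det := by
  obtain ⟨r₀, hr₀⟩ := (h.2 0 q).2 (by omega)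
  refine shiftMat_step (r₀ := r₀) (κ₁ := 1) (L' := rowLen q p 0 δ) ?_ ?_ ?_ ?_ ?_ ?_
    (ih _ (h.delete r₀ ?_)) ?_
  · simp [hr₀]
  · intro r
    have := h.mem r
    simp only [rowLen]
    grind
  · simp [hr₀, rowLen]; omega
  · simp [hr₀, rowLen]
  · intro r h1 h2
    apply h.1
    rw [hr₀] at h1 ⊢
    simp only [h1, rowLen] at h2
    ext <;> grind
  · intro r hr
    have := h.mem r
    simp only [rowLen, hr₀]
    grind
  · intro κ k
    rw [hr₀, Ne, Prod.mk.injEq]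
    omega
  · intro d
    refine ⟨fun u => if u = (1, q + 1) then 1 else if u = (0, 0) then 1
      else if u = (0, p) then d else 0, ?_, ?_, ?_⟩
    · simp [hr₀, rowLen]; omega
    · intro κ h1 h2
      rw [hr₀] at h1
      simp only at h1
      simp [h1, h2]
    · intro c hc
      by_cases hcp : c < q + 1
      · obtain ⟨r, hr⟩ := (h.2 0 c).2 (by omega)
        refine ⟨r, ?_⟩
        simp only [hr, rowLen]
        refine ⟨le_rfl, by simp, by simp, ?_⟩
        intro c' h1 h2
        omega
      · obtain ⟨r, hr⟩ := (h.2 1 (c - (q + 1))).2 (by omega)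
        refine ⟨r, ?_⟩
        simp only [hr, rowLen]
        refine ⟨by omega, by simp; omega, ?_, ?_⟩
        · rw [if_pos (by ext <;> simp only; omega)]; exact one_ne_zero
        · intro c' h1 h2
          simp only [Prod.mk.injEq]
          rw [if_neg (by omega), if_neg (by omega), if_neg (by omega)]

/-- Removing the last sequence `y`: the point has `a = t ^ (p + s + 1)`, `b = 1`, and the shifted `y`
rows are the unit vectors of the columns `p, …, p + s`, the last one perturbed by `d` in the last
column. -/
theorem irreducible_step_y {N q p s δ : ℕ} (hq : 1 ≤ q) (hδ : δ ≤ p) (hN : N = q + p + s)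
    {ρ : Fin (N + 1) → ℕ × ℕ} (h : RowLabels q p (s + 1) δ ρ)
    (ih : ∀ ρ' : Fin N → ℕ × ℕ, RowLabels q p s δ ρ' →
      Irreducible (shiftMat (rowLen q p s δ) ρ').det) :
    Irreducible (shiftMat (rowLen q p (s + 1) δ) ρ).det := by
  obtain ⟨r₀, hr₀⟩ := (h.2 (s + 2) δ).2 (by omega)
  refine shiftMat_step (r₀ := r₀) (κ₁ := 0) (L' := rowLen q p s δ) ?_ ?_ ?_ ?_ ?_ ?_
    (ih _ (h.delete r₀ ?_)) ?_
  · simp [hr₀]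
  · intro r
    have := h.mem r
    simp only [rowLen]
    grind
  · simp [hr₀, rowLen]; omega
  · simp [hr₀, rowLen]; omega
  · intro r h1 h2
    apply h.1
    have := h.mem r
    rw [hr₀] at h1 ⊢
    ext <;> grind
  · intro r hr
    have := h.mem r
    have hne : ρ r ≠ ρ r₀ := fun h' => hr (h.1 h')
    simp only [rowLen, hr₀] at *
    grind
  · intro κ k
    rw [hr₀, Ne, Prod.mk.injEq]
    omega
  · intro d
    refine ⟨fun u => if u = (0, p + s + 1) then 1 else if u = (1, 0) then 1
      else if 2 ≤ u.1 ∧ u.1 ≤ s + 2 ∧ u.2 + δ + 2 = p + u.1 then 1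
      else if u = (s + 2, q + p + s - δ) then d else 0, ?_, ?_, ?_⟩
    · simp only [hr₀, rowLen, Prod.mk.injEq]
      grind
    · intro κ h1 h2
      rw [hr₀] at h1
      simp only [rowLen, Prod.mk.injEq]
      grind
    · intro c hc
      by_cases hcp : c < p
      · obtain ⟨r, hr⟩ := (h.2 1 c).2 (by omega)
        refine ⟨r, ?_⟩
        simp only [hr, rowLen]
        refine ⟨le_rfl, by simp, by simp, ?_⟩
        intro c' h1 h2
        omega
      by_cases hcs : c < p + s + 1
      · obtain ⟨r, hr⟩ := (h.2 (c - p + 2) δ).2 (by omega)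
        refine ⟨r, ?_⟩
        simp only [hr, rowLen, Prod.mk.injEq]
        refine ⟨by omega, by grind, by grind, ?_⟩
        intro c' h1 h2
        grind
      · obtain ⟨r, hr⟩ := (h.2 0 (c - (p + s + 1))).2 (by omega)
        refine ⟨r, ?_⟩
        simp only [hr, rowLen, Prod.mk.injEq]
        refine ⟨by omega, by grind, by grind, ?_⟩
        intro c' h1 h2
        grind

/-- Remove all `y`, then all shifts of `a` but one, then all shifts of `b`; what is left is the
`1 × 1` matrix with entry `x_{0,0}`. For `s = 0` the determinant is the resultant of two generic
polynomials of degrees `p` and `q`. -/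
theorem irreducible_shiftMat {q p : ℕ} (hq : 1 ≤ q) (hp : 1 ≤ p) {δ : ℕ} (hδ : δ ≤ p) (s : ℕ) :
    ∀ {N : ℕ}, N = q + p + s → ∀ ρ : Fin N → ℕ × ℕ, RowLabels q p s δ ρ →
      Irreducible (shiftMat (rowLen q p s δ) ρ).det := by
  induction s with
  | succ s ih =>
    rintro N hN ρ h
    obtain rfl : N = (q + p + s) + 1 := by omega
    exact irreducible_step_y hq hδ rfl h fun ρ' h' => ih rfl ρ' h'
  | zero =>
    clear hδ
    induction q, hq using Nat.le_induction with
    | succ q hq ih =>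
      rintro N hN ρ h
      obtain rfl : N = (q + p) + 1 := by omega
      exact irreducible_step_a hp rfl h fun ρ' h' => ih rfl ρ' h'
    | base =>
      clear hp
      induction p with
      | succ p ih =>
        rintro N hN ρ h
        obtain rfl : N = (1 + p) + 1 := by omega
        exact irreducible_step_b le_rfl rfl h fun ρ' h' => ih rfl ρ' h'
      | zero =>
        rintro N hN ρ h
        exact irreducible_shiftMat_base rfl rfl rfl hN h

/-! ### Identification with `G_{ii}(X)` -/

/-- The sequence number of row `x` (counted from `0`) of `X`: the first row is `a`, the last is `b`,
and the rows `i, …, m - 1` are the `y`. The remaining rows do not occur in `G_{ii}(X)` and are given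
unused numbers, which keeps the assignment injective. -/
def rowKind (m i x : ℕ) : ℕ :=
  if x = 0 then 0 else if x = m then 1 else if i ≤ x then x - i + 2 else m + 2 + x

/-- The label of row `r` of `G_{ii}(X)`: which sequence it is, and by how much it is shifted. -/
def gLabel (m i r : ℕ) : ℕ × ℕ :=
  if r < 2 * (i - 1) then (r % 2, r / 2) else if r = 2 * (i - 1) then (0, i - 1)
    else if r = m + i - 1 then (1, i - 1) else (r + 3 - 2 * i, i - 1)

theorem rowLabels_gLabel {m i : ℕ} (hi2 : 2 ≤ i) (him : i ≤ m) :
    RowLabels i i (m - i) (i - 1) fun r : Fin (m + i) => gLabel m i r := by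
  constructor
  · intro r r' h
    have h1 := r.2
    have h2 := r'.2
    ext
    simp only [gLabel] at h
    split_ifs at h <;> simp only [Prod.mk.injEq] at h <;> omega
  · intro κ k
    constructor
    · rintro ⟨r, hr⟩
      have h1 := r.2
      simp only [gLabel] at hr
      split_ifs at hr <;> simp only [Prod.mk.injEq] at hr <;> omega
    · rintro (⟨rfl, hk⟩ | ⟨rfl, hk⟩ | ⟨h1, h2, rfl⟩)
      · refine ⟨⟨2 * k, by omega⟩, ?_⟩
        simp only [gLabel]
        grind
      · by_cases hk' : k = i - 1
        · refine ⟨⟨m + i - 1, by omega⟩, ?_⟩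
          simp only [gLabel]
          grind
        · refine ⟨⟨2 * k + 1, by omega⟩, ?_⟩
          simp only [gLabel]
          grind
      · refine ⟨⟨κ + 2 * i - 3, by omega⟩, ?_⟩
        simp only [gLabel]
        grind

/-- The renaming of the entries of `X` as variables of `shiftMat`. -/
def varMap (m i : ℕ) (u : Fin (m + 1) × Fin (m + 1)) : ℕ × ℕ := (rowKind m i u.1, u.2)

theorem varMap_injective {m i : ℕ} (hi2 : 2 ≤ i) :
    Function.Injective (varMap m i) := by
  rintro ⟨a, b⟩ ⟨a', b'⟩ h
  have ha := a.2
  have ha' := a'.2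
  simp only [varMap, Prod.mk.injEq, rowKind] at h
  ext
  · simp only
    have := h.1
    split_ifs at this <;> omega
  · exact h.2

theorem rename_ent_genX {m i x y : ℕ} (hx : x < m + 1) (hy : y < m + 1) :
    MvPolynomial.rename (varMap m i) (ent (genX m) x y) =
      MvPolynomial.X (rowKind m i x, y) := by
  simp [ent, genX, hx, hy, varMap]

theorem rename_matG {m i : ℕ} (hi2 : 2 ≤ i) (him : i ≤ m) :
    (MvPolynomial.rename (varMap m i)).mapMatrix (matG i i (genX m)) =
      shiftMat (rowLen i i (m - i) (i - 1)) fun r : Fin (m + i) => gLabel m i r := by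
  -- A row of `G_{ii}` consisting of row `x` of `X` shifted by `k` has label `(κ, k)`.
  have key : ∀ (c x k κ : ℕ), x < m + 1 → rowKind m i x = κ →
      rowLen i i (m - i) (i - 1) κ = m + 1 →
      MvPolynomial.rename (varMap m i)
        (if k ≤ c ∧ c ≤ k + m then ent (genX m) x (c - k) else 0) =
      if k ≤ c ∧ c < k + rowLen i i (m - i) (i - 1) κ then MvPolynomial.X (κ, c - k) else 0 := by
    intro c x k κ hx hκ hlen
    rw [hlen]
    by_cases hc : k ≤ c ∧ c ≤ k + m
    · rw [if_pos hc, if_pos (by omega), rename_ent_genX hx (by omega), hκ]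
    · rw [if_neg hc, if_neg (by omega), map_zero]
  have hlen : ∀ κ, rowLen i i (m - i) (i - 1) κ = m + 1 := by
    intro κ
    simp only [rowLen]
    split_ifs <;> omega
  ext1 r c
  have hr := r.2
  simp only [AlgHom.mapMatrix_apply, Matrix.map_apply, matG, shiftMat, Matrix.of_apply]
  by_cases h1 : (r : ℕ) < 2 * (i - 2)
  · have hg : gLabel m i r = ((r : ℕ) % 2, (r : ℕ) / 2) := by
      rw [gLabel, if_pos (by omega)]
    rw [if_pos h1, hg]
    refine key _ _ _ _ (by split_ifs <;> omega) ?_ (hlen _)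
    simp only [rowKind]
    split_ifs <;> omega
  by_cases h2 : (r : ℕ) < 2 * (i - 2) + (i - i + 2)
  · have hg : gLabel m i r = ((r : ℕ) - 2 * (i - 2), i - 2) := by
      rw [gLabel, if_pos (by omega)]
      ext <;> simp only <;> omega
    rw [if_neg h1, if_pos h2, hg]
    refine key _ _ _ _ (by split_ifs <;> omega) ?_ (hlen _)
    simp only [rowKind]
    split_ifs <;> omega
  · have hg : (gLabel m i r).2 = i - 1 := by
      rw [gLabel, if_neg (by omega)]
      split_ifs <;> rfl
    rw [if_neg h1, if_neg h2, hg]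
    refine key _ _ _ _ (by split_ifs <;> omega) ?_ (hlen _)
    simp only [rowKind, gLabel]
    grind

/-- for `n = m+1 ≥ 4` and every `i ∈ [2, n-1]`, the polynomial
`g_{ii} = det G_{ii}(X)` in the `n²` indeterminate entries of a generic matrix `X` is
irreducible in `ℂ[x_{kl}]`. -/
theorem g_ii_irreducible (m : ℕ) (hm : 3 ≤ m) (i : ℕ) (hi2 : 2 ≤ i) (him : i ≤ m) :
    Irreducible ((matG i i (genX m)).det) := by
  have hirr := irreducible_shiftMat (q := i) (p := i) (by omega) (by omega) (δ := i - 1)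
    (by omega) (m - i) (N := m + i) (by omega) _ (rowLabels_gLabel hi2 him)
  rw [← rename_matG hi2 him, ← AlgHom.map_det] at hirr
  have hf := varMap_injective (m := m) hi2
  -- An injective renaming has a left inverse, so it reflects units and hence irreducibility.
  have : IsLocalHom (MvPolynomial.rename (R := ℂ) (varMap m i)) := ⟨fun P hP => by
    rw [← MvPolynomial.killCompl_rename_app hf P]
    exact hP.map _⟩
  exact hirr.of_map

end
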